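/- (Gottschalk–Hedlund type growth in Cesàro average.) Let M be a compact metric space, φ : ℝ × M → M a continuous flow, and μ a φ-invariant Borel probability measure which is the unique φ-invariant Borel probability measure on M (unique ergodicity). Let f : M → ℝ be continuous and set F_t(x) := ∫₀^t f(φ_τ(x)) dτ. Assume f is not a measurable coboundary for φ, i.e., there is no Borel measurable function u : M → ℝ such that for every t ∈ ℝ, F_t(x) = u(φ_t(x)) − u(x) for μ-almost every x. Then for every C > 1, lim_{T → ∞} (1/T) ∫₀^T μ{x ∈ M : |F_t(x)| < C} dt = 0. -/

import Mathlib

open MeasureTheory Filter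

/-!
The skew product `Φ_t (x, y) = (φ_t x, y + F_t x)` preserves `μ × Leb`.  If `|F_t x| < C`, then
`Φ_t` sends `{x} × [0, 1]` into `M × [-C, C + 1]`, so the averages of `μ {|F_t| < C}` are dominated
by those of `(μ × Leb) (A ∩ Φ_t⁻¹ B)` for two sets of finite measure.  By the mean ergodic theorem
in `L²(μ × Leb)` these tend to `0`, unless there is a nonzero `Φ`-invariant `w ∈ L²(μ × Leb)`.
In that case `ρ_x = |w(x, y)|² dy` is a finite measure on the fibre over `x`, nonzero for almost
every `x` by ergodicity, and `ρ_{φ_t x}` is the translate of `ρ_x` by `F_t x`.  A median of `ρ_x` is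
then a transfer function for `F`.
-/

open Set Function Topology
open scoped ENNReal InnerProductSpace

section MeanErgodic

section Average

lemma intervalIntegrable_of_norm_le {E : Type*} [NormedAddCommGroup E] {μ : Measure ℝ}
    [IsLocallyFiniteMeasure μ] {a : ℝ → E} {B : ℝ} (ha : AEStronglyMeasurable a μ)
    (hB : ∀ t, ‖a t‖ ≤ B) (x y : ℝ) : IntervalIntegrable a μ x y :=
  intervalIntegrable_const.mono_fun' (g := fun _ => B) ha.restrict (ae_of_all _ hB)

variable {E : Type*} [NormedAddCommGroup E] [NormedSpace ℝ E] {a : ℝ → E} {B : ℝ}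

lemma norm_inv_smul_intervalIntegral_le (hB : ∀ t, ‖a t‖ ≤ B) (T : ℝ) :
    ‖T⁻¹ • ∫ t in (0 : ℝ)..T, a t‖ ≤ B := by
  have hint : ‖∫ t in (0 : ℝ)..T, a t‖ ≤ B * |T| := by
    simpa using intervalIntegral.norm_integral_le_of_norm_le_const
      (a := 0) (b := T) fun t _ => hB t
  have hB0 : 0 ≤ B := (norm_nonneg _).trans (hB 0)
  rw [norm_smul, norm_inv, Real.norm_eq_abs]
  exact inv_mul_le_of_le_mul₀ (abs_nonneg T) hB0 (mul_comm B _ ▸ hint)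

lemma tendsto_average_shift_sub (ha : AEStronglyMeasurable a volume) (hB : ∀ t, ‖a t‖ ≤ B)
    (s : ℝ) :
    Tendsto (fun T : ℝ => T⁻¹ • ∫ t in (0 : ℝ)..T, (a (t + s) - a t)) atTop (𝓝 0) := by
  have hint := intervalIntegrable_of_norm_le ha hB
  have hshift : ∀ x y, IntervalIntegrable (fun t => a (t + s)) volume x y :=
    intervalIntegrable_of_norm_le
      (ha.comp_measurePreserving (measurePreserving_add_right volume s)) fun t => hB (t + s)
  have hends (T : ℝ) : ∫ t in (0 : ℝ)..T, (a (t + s) - a t) =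
      (∫ t in T..T + s, a t) - ∫ t in (0 : ℝ)..s, a t := by
    rw [intervalIntegral.integral_sub (hshift 0 T) (hint 0 T),
      intervalIntegral.integral_comp_add_right, zero_add,
      intervalIntegral.integral_interval_sub_interval_comm' (hint _ _) (hint _ _) (hint _ _)]
  have hbound (T : ℝ) : ‖∫ t in (0 : ℝ)..T, (a (t + s) - a t)‖ ≤ B * |s| + B * |s| := by
    rw [hends]
    refine (norm_sub_le _ _).trans (add_le_add ?_ ?_)
    · simpa using intervalIntegral.norm_integral_le_of_norm_le_const
        (a := T) (b := T + s) fun t _ => hB t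
    · simpa using intervalIntegral.norm_integral_le_of_norm_le_const
        (a := 0) (b := s) fun t _ => hB t
  exact tendsto_inv_atTop_zero.zero_smul_isBoundedUnder_le
    (isBoundedUnder_of ⟨_, hbound⟩)

lemma tendsto_average_of_norm_le {b : ℝ → ℝ} (hb : ∀ x y, IntervalIntegrable b volume x y)
    (hab : ∀ t, ‖a t‖ ≤ b t)
    (hlim : Tendsto (fun T : ℝ => T⁻¹ * ∫ t in (0 : ℝ)..T, b t) atTop (𝓝 0)) :
    Tendsto (fun T : ℝ => T⁻¹ • ∫ t in (0 : ℝ)..T, a t) atTop (𝓝 0) := by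
  refine squeeze_zero_norm' ?_ hlim
  filter_upwards [eventually_ge_atTop 0] with T hT
  rw [norm_smul, norm_inv, Real.norm_of_nonneg hT]
  exact mul_le_mul_of_nonneg_left (intervalIntegral.norm_integral_le_of_norm_le hT
    (ae_of_all _ fun t _ => hab t) (hb 0 T)) (inv_nonneg.2 hT)

end Average

variable {𝕜 H : Type*} [RCLike 𝕜] [NormedAddCommGroup H] [InnerProductSpace 𝕜 H] [CompleteSpace H]

lemma mem_closure_span_sub_of_orthogonal_fixed {ι : Type*} (U : ι → H →ₗᵢ[𝕜] H) {h : H}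
    (hfix : ∀ w, (∀ s, U s w = w) → inner 𝕜 w h = 0) :
    h ∈ (Submodule.span 𝕜 (range fun p : ι × H => U p.1 p.2 - p.2)).topologicalClosure := by
  rw [← Submodule.orthogonal_orthogonal_eq_closure, Submodule.mem_orthogonal]
  refine fun w hw => hfix w fun s => ?_
  have horth : inner 𝕜 (U s w - w) w = 0 :=
    Submodule.inner_right_of_mem_orthogonal (Submodule.subset_span (mem_range_self (s, w))) hw
  refine eq_of_norm_le_re_inner_eq_norm_sq (𝕜 := 𝕜) ((U s).norm_map w).le ?_
  rw [inner_sub_left, sub_eq_zero] at horth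
  rw [horth, inner_self_eq_norm_sq]

theorem tendsto_average_inner_of_orthogonal_fixed (U : ℝ → H →ₗᵢ[𝕜] H)
    (hU : ∀ s t, U (t + s) = (U t).comp (U s)) {k h : H}
    (hmeas : ∀ g, AEStronglyMeasurable (fun t => inner 𝕜 k (U t g)) volume)
    (hfix : ∀ w, (∀ s, U s w = w) → inner 𝕜 w h = 0) :
    Tendsto (fun T : ℝ => T⁻¹ • ∫ t in (0 : ℝ)..T, inner 𝕜 k (U t h)) atTop (𝓝 0) := by
  have hbound (g : H) (t : ℝ) : ‖inner 𝕜 k (U t g)‖ ≤ ‖k‖ * ‖g‖ := by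
    simpa using norm_inner_le_norm (𝕜 := 𝕜) k (U t g)
  have hint (g : H) := intervalIntegrable_of_norm_le (hmeas g) (hbound g)
  let L (T : ℝ) : H →ₗ[𝕜] 𝕜 :=
    { toFun := fun g => T⁻¹ • ∫ t in (0 : ℝ)..T, inner 𝕜 k (U t g)
      map_add' := fun g g' => by
        simp only [map_add, inner_add_right]
        rw [intervalIntegral.integral_add (hint g _ _) (hint g' _ _), smul_add]
      map_smul' := fun c g => by
        simp only [map_smul, inner_smul_right, intervalIntegral.integral_const_mul,
          RingHom.id_apply, smul_eq_mul, mul_smul_comm] }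
  have hlip (T : ℝ) : LipschitzWith ‖k‖₊ (L T) :=
    AddMonoidHomClass.lipschitz_of_bound_nnnorm _ _ fun g =>
      norm_inv_smul_intervalIntegral_le (hbound g) T
  have hclosed : IsClosed {g | Tendsto (L · g) atTop (𝓝 0)} :=
    (LipschitzWith.uniformEquicontinuous _ _ hlip).equicontinuous.isClosed_setOfPred_tendsto
      continuous_const
  refine closure_minimal (fun g hg => ?_) hclosed (mem_closure_span_sub_of_orthogonal_fixed U hfix)
  induction hg using Submodule.span_induction with
  | mem g hg =>
    obtain ⟨⟨s, g⟩, rfl⟩ := hg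
    simpa [L, inner_sub_right, hU] using tendsto_average_shift_sub (hmeas g) (hbound g) s
  | zero => simp
  | add g g' _ _ hg hg' => simpa using hg.add hg'
  | smul c g _ hg => simpa using hg.const_mul c

end MeanErgodic

section Median

/-- The least `c` such that `(-∞, c]` carries at least half of the mass of `ρ`; it serves as a
measurable and translation-equivariant way to pick a point of the line.  It is meaningful for
`0 < ρ univ < ∞` only: `sInf` takes its junk value `0` at `ρ = 0`, for instance. -/
noncomputable def lowerMedian (ρ : Measure ℝ) : ℝ :=
  sInf {c | ρ univ / 2 ≤ ρ (Iic c)}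

variable {ρ : Measure ℝ}

lemma nonempty_half_le_measure_Iic (h0 : ρ univ ≠ 0) (hfin : ρ univ ≠ ∞) :
    {c | ρ univ / 2 ≤ ρ (Iic c)}.Nonempty :=
  ((tendsto_measure_Iic_atTop ρ).eventually_const_le (ENNReal.half_lt_self h0 hfin)).exists

lemma bddBelow_half_le_measure_Iic (h0 : ρ univ ≠ 0) (hfin : ρ univ ≠ ∞) :
    BddBelow {c | ρ univ / 2 ≤ ρ (Iic c)} := by
  have hlim : Tendsto (fun c => ρ (Iic c)) atBot (𝓝 (ρ ∅)) := by
    have hempty : ⋂ c : ℝ, Iic c = ∅ := iInter_Iic_eq_empty_iff.2 (by simp)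
    exact hempty ▸ tendsto_measure_iInter_atBot (fun c => measurableSet_Iic.nullMeasurableSet)
      monotone_Iic ⟨0, measure_ne_top_of_subset (subset_univ _) hfin⟩
  obtain ⟨b, hb⟩ := (hlim.eventually_lt_const (by simpa using h0 : ρ ∅ < ρ univ / 2)).exists
  exact ⟨b, fun c hc => le_of_not_ge fun hcb =>
    (hc.trans (measure_mono (Iic_subset_Iic.2 hcb))).not_gt hb⟩

lemma lowerMedian_lt_iff (h0 : ρ univ ≠ 0) (hfin : ρ univ ≠ ∞) {r : ℝ} :
    lowerMedian ρ < r ↔ ∃ q : ℚ, (q : ℝ) < r ∧ ρ univ / 2 ≤ ρ (Iic (q : ℝ)) := by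
  rw [lowerMedian, csInf_lt_iff (bddBelow_half_le_measure_Iic h0 hfin)
    (nonempty_half_le_measure_Iic h0 hfin)]
  constructor
  · rintro ⟨c, hc, hcr⟩
    obtain ⟨q, hcq, hqr⟩ := exists_rat_btwn hcr
    exact ⟨q, hqr, hc.trans (measure_mono (Iic_subset_Iic.2 hcq.le))⟩
  · rintro ⟨q, hqr, hq⟩
    exact ⟨q, hq, hqr⟩

lemma lowerMedian_map_add_const (h0 : ρ univ ≠ 0) (hfin : ρ univ ≠ ∞) (a : ℝ) :
    lowerMedian (ρ.map (· + a)) = lowerMedian ρ + a := by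
  have himage : {c | ρ.map (· + a) univ / 2 ≤ ρ.map (· + a) (Iic c)} =
      (· + a) '' {c | ρ univ / 2 ≤ ρ (Iic c)} := by
    ext c
    simp [Measure.map_apply (measurable_add_const a) measurableSet_Iic,
      Measure.map_apply (measurable_add_const a) MeasurableSet.univ, ← sub_eq_add_neg]
  rw [lowerMedian, himage]
  exact ((OrderIso.addRight a).map_csInf' (nonempty_half_le_measure_Iic h0 hfin)
    (bddBelow_half_le_measure_Iic h0 hfin)).symm

lemma measurable_indicator_lowerMedian :
    Measurable ({ρ : Measure ℝ | ρ univ ≠ 0 ∧ ρ univ ≠ ∞}.indicator lowerMedian) := by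
  have huniv : Measurable fun ρ : Measure ℝ => ρ univ := Measure.measurable_coe .univ
  have hs : MeasurableSet {ρ : Measure ℝ | ρ univ ≠ 0 ∧ ρ univ ≠ ∞} :=
    (huniv (measurableSet_singleton 0).compl).inter (huniv (measurableSet_singleton ∞).compl)
  refine measurable_of_restrict_of_restrict_compl hs (measurable_of_Iio fun r => ?_) ?_
  · have hpre : Set.domRestrict {ρ : Measure ℝ | ρ univ ≠ 0 ∧ ρ univ ≠ ∞}
          (indicator {ρ | ρ univ ≠ 0 ∧ ρ univ ≠ ∞} lowerMedian) ⁻¹' Iio r =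
        Subtype.val ⁻¹' ⋃ q : ℚ, ⋃ _ : (q : ℝ) < r, {ρ | ρ univ / 2 ≤ ρ (Iic (q : ℝ))} := by
      ext ⟨ρ, hρ⟩
      rw [mem_preimage, domRestrict_apply, indicator_of_mem hρ, mem_Iio,
        lowerMedian_lt_iff hρ.1 hρ.2]
      simp only [mem_preimage, mem_iUnion, exists_prop, mem_ofPred_eq]
    rw [hpre]
    exact measurable_subtype_coe (.iUnion fun q => .iUnion fun _ =>
      measurableSet_le (huniv.div_const 2) (Measure.measurable_coe measurableSet_Iic))
  · convert measurable_const (a := (0 : ℝ)) with ρ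
    exact indicator_of_notMem ρ.2 _

end Median

section Flow

variable {X : Type*} [MeasurableSpace X]

/-- A jointly measurable flow `φ` on `X` each of whose time-`t` maps preserves `μ`. -/
structure IsMeasurePreservingFlow (φ : ℝ → X → X) (μ : Measure X) : Prop where
  measurable_uncurry : Measurable (uncurry φ)
  map_zero : φ 0 = id
  map_add : ∀ s t, φ (t + s) = φ t ∘ φ s
  measurePreserving : ∀ t, MeasurePreserving (φ t) μ μ

/-- Ergodicity of `φ`: a measurable set that is invariant up to null sets, with a null set that may
depend on `t`, is null or conull.  As in `ErgodicSMul`, invariance of `μ` is a separate matter. -/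
def IsErgodicFlow (φ : ℝ → X → X) (μ : Measure X) : Prop :=
  ∀ s, MeasurableSet s → (∀ t, φ t ⁻¹' s =ᵐ[μ] s) → EventuallyConst s (ae μ)

/-- A jointly measurable real cocycle over `φ`, such as the Birkhoff integrals of a function. -/
structure IsMeasurableCocycle (φ : ℝ → X → X) (F : ℝ → X → ℝ) : Prop where
  measurable_uncurry : Measurable (uncurry F)
  map_add : ∀ s t x, F (t + s) x = F t x + F s (φ t x)

/-- `F t = u ∘ φ t - u` almost everywhere for some measurable transfer function `u`, where the null
set may depend on `t`. -/
def IsMeasurableCoboundary (φ : ℝ → X → X) (μ : Measure X) (F : ℝ → X → ℝ) : Prop :=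
  ∃ u : X → ℝ, Measurable u ∧ ∀ t, ∀ᵐ x ∂μ, F t x = u (φ t x) - u x

/-- The skew product over `φ` on `X × ℝ`, which translates the fibre over `x` by `F t x`. -/
def skewProduct (φ : ℝ → X → X) (F : ℝ → X → ℝ) (t : ℝ) (p : X × ℝ) : X × ℝ :=
  (φ t p.1, p.2 + F t p.1)

variable {φ : ℝ → X → X} {μ : Measure X}

namespace IsMeasurePreservingFlow

/-- The Koopman operator `w ↦ w ∘ φ t` on real-valued `L²` functions, as a linear isometry. -/
noncomputable def koopman (hφ : IsMeasurePreservingFlow φ μ) (t : ℝ) :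
    Lp ℝ 2 μ →ₗᵢ[ℝ] Lp ℝ 2 μ :=
  Lp.compMeasurePreservingₗᵢ ℝ (φ t) (hφ.measurePreserving t)

lemma coeFn_koopman (hφ : IsMeasurePreservingFlow φ μ) (t : ℝ) (w : Lp ℝ 2 μ) :
    hφ.koopman t w =ᵐ[μ] w ∘ φ t :=
  Lp.coeFn_compMeasurePreserving w (hφ.measurePreserving t)

lemma koopman_add (hφ : IsMeasurePreservingFlow φ μ) (s t : ℝ) :
    hφ.koopman (t + s) = (hφ.koopman t).comp (hφ.koopman s) := by
  ext1 w
  refine Lp.ext ?_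
  have hs := (hφ.measurePreserving t).quasiMeasurePreserving.ae_eq_comp (hφ.coeFn_koopman s w)
  filter_upwards [hφ.coeFn_koopman (t + s) w, hφ.coeFn_koopman t (hφ.koopman s w), hs]
    with x hts ht hs
  calc hφ.koopman (t + s) w x = w (φ (s + t) x) := by rw [hts, add_comm, comp_apply]
    _ = w (φ s (φ t x)) := by rw [hφ.map_add, comp_apply]
    _ = hφ.koopman t (hφ.koopman s w) x := (ht.trans hs).symm

lemma aestronglyMeasurable_inner_koopman [SFinite μ] (hφ : IsMeasurePreservingFlow φ μ)
    (k w : Lp ℝ 2 μ) :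
    AEStronglyMeasurable (fun t => ⟪k, hφ.koopman t w⟫_ℝ) volume := by
  have hinner (t : ℝ) : ⟪k, hφ.koopman t w⟫_ℝ = ∫ x, w (φ t x) * k x ∂μ := by
    rw [L2.inner_def]
    refine integral_congr_ae ?_
    filter_upwards [hφ.coeFn_koopman t w] with x hx
    simp [hx]
  simp_rw [hinner]
  refine StronglyMeasurable.aestronglyMeasurable (StronglyMeasurable.integral_prod_right ?_)
  exact ((Lp.stronglyMeasurable w).comp_measurable hφ.measurable_uncurry).mul
    ((Lp.stronglyMeasurable k).comp_measurable measurable_snd)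

lemma intervalIntegrable_measureReal_inter_preimage [SFinite μ] (hφ : IsMeasurePreservingFlow φ μ)
    {A B : Set X} (hA : MeasurableSet A) (hB : MeasurableSet B) (hmA : μ A ≠ ∞) (x y : ℝ) :
    IntervalIntegrable (fun t => μ.real (A ∩ φ t ⁻¹' B)) volume x y := by
  have hmeas : Measurable fun t => μ.real (A ∩ φ t ⁻¹' B) :=
    (measurable_measure_prodMk_left
      ((measurable_snd hA).inter (hφ.measurable_uncurry hB))).ennreal_toReal
  refine intervalIntegrable_of_norm_le (B := μ.real A) hmeas.aestronglyMeasurable (fun t => ?_) x y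
  rw [Real.norm_of_nonneg measureReal_nonneg]
  exact measureReal_mono inter_subset_left hmA

theorem tendsto_average_measureReal_inter_preimage [SFinite μ] (hφ : IsMeasurePreservingFlow φ μ)
    (hfix : ∀ w : Lp ℝ 2 μ, (∀ t, w ∘ φ t =ᵐ[μ] w) → w = 0) {A B : Set X}
    (hA : MeasurableSet A) (hB : MeasurableSet B) (hmA : μ A ≠ ∞) (hmB : μ B ≠ ∞) :
    Tendsto (fun T : ℝ => T⁻¹ * ∫ t in (0 : ℝ)..T, μ.real (A ∩ φ t ⁻¹' B)) atTop (𝓝 0) := by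
  have hkoopman (t : ℝ) : ⟪indicatorConstLp 2 hA hmA (1 : ℝ),
      hφ.koopman t (indicatorConstLp 2 hB hmB 1)⟫_ℝ = μ.real (A ∩ φ t ⁻¹' B) := by
    have hmt : μ (φ t ⁻¹' B) ≠ ∞ := by
      rwa [(hφ.measurePreserving t).measure_preimage hB.nullMeasurableSet]
    change ⟪_, Lp.compMeasurePreserving _ _ _⟫_ℝ = _
    rw [Lp.indicatorConstLp_compMeasurePreserving,
      L2.real_inner_indicatorConstLp_one_indicatorConstLp_one hA _ hmA hmt]
  simp_rw [← hkoopman]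
  refine tendsto_average_inner_of_orthogonal_fixed hφ.koopman hφ.koopman_add
    (hφ.aestronglyMeasurable_inner_koopman _) fun w hw => ?_
  rw [hfix w fun t => (hφ.coeFn_koopman t w).symm.trans (by rw [hw]), inner_zero_left]

end IsMeasurePreservingFlow

variable {F : ℝ → X → ℝ}

lemma map_add_withDensity_eq {G : Type*} [AddGroup G] [MeasurableSpace G] [MeasurableAdd G]
    {ν : Measure G} [ν.IsAddRightInvariant] {g g' : G → ℝ≥0∞} {a : G}
    (h : ∀ᵐ y ∂ν, g' (y + a) = g y) :
    (ν.withDensity g).map (· + a) = ν.withDensity g' := by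
  ext s hs
  rw [Measure.map_apply (measurable_add_const a) hs, withDensity_apply _ hs,
    withDensity_apply _ (measurable_add_const a hs),
    ← (measurePreserving_add_right ν a).setLIntegral_comp_preimage_emb
      (measurableEmbedding_addRight a) g' s]
  exact (setLIntegral_congr_fun_ae (measurable_add_const a hs) (h.mono fun y hy _ => hy)).symm

lemma isMeasurePreservingFlow_skewProduct [SFinite μ] (hφ : IsMeasurePreservingFlow φ μ)
    (hF : IsMeasurableCocycle φ F) :
    IsMeasurePreservingFlow (skewProduct φ F) (μ.prod volume) where
  measurable_uncurry := by
    have hproj : Measurable fun q : ℝ × X × ℝ => (q.1, q.2.1) := by fun_prop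
    exact (hφ.measurable_uncurry.comp hproj).prodMk
      (measurable_snd.snd.add (hF.measurable_uncurry.comp hproj))
  map_zero := by
    ext1 p
    have hF0 : F 0 p.1 = 0 := by simpa [hφ.map_zero] using hF.map_add 0 0 p.1
    simp [skewProduct, hφ.map_zero, hF0]
  map_add s t := by
    ext1 p
    have hF := hF.map_add t s p.1
    rw [add_comm s t] at hF
    simp [skewProduct, hφ.map_add, hF, add_assoc]
  measurePreserving t :=
    (hφ.measurePreserving t).skew_product
      (measurable_snd.add (hF.measurable_uncurry.of_uncurry_left.comp measurable_fst))
      (ae_of_all _ fun x => map_add_right_eq_self volume (F t x))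

theorem isMeasurableCoboundary_of_equivariant_measure
    (hφ : ∀ t, Measure.QuasiMeasurePreserving (φ t) μ μ) {ρ : X → Measure ℝ} (hρ : Measurable ρ)
    (hρ0 : ∀ᵐ x ∂μ, ρ x univ ≠ 0) (hρfin : ∀ᵐ x ∂μ, ρ x univ ≠ ∞)
    (hmap : ∀ t, ∀ᵐ x ∂μ, ρ (φ t x) = (ρ x).map (· + F t x)) :
    IsMeasurableCoboundary φ μ F := by
  refine ⟨_, measurable_indicator_lowerMedian.comp hρ, fun t => ?_⟩
  have hmedian : ∀ᵐ x ∂μ, {ρ : Measure ℝ | ρ univ ≠ 0 ∧ ρ univ ≠ ∞}.indicator lowerMedian (ρ x) =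
      lowerMedian (ρ x) := by
    filter_upwards [hρ0, hρfin] with x h0 hfin
    exact indicator_of_mem (s := {ρ : Measure ℝ | ρ univ ≠ 0 ∧ ρ univ ≠ ∞}) ⟨h0, hfin⟩ _
  filter_upwards [hρ0, hρfin, hmedian, (hφ t).ae hmedian, hmap t] with x h0 hfin hx hφx hmap
  rw [comp_apply, comp_apply, hx, hφx, hmap, lowerMedian_map_add_const h0 hfin,
    add_sub_cancel_left]

lemma ae_withDensity_section_eq {g : X × ℝ → ℝ≥0∞} {t : ℝ}
    (hinv : g ∘ skewProduct φ F t =ᵐ[μ.prod volume] g) :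
    ∀ᵐ x ∂μ, volume.withDensity (fun y => g (φ t x, y)) =
      (volume.withDensity fun y => g (x, y)).map (· + F t x) := by
  filter_upwards [Measure.ae_ae_of_ae_prod hinv] with x hx
  exact (map_add_withDensity_eq hx).symm

theorem isMeasurableCoboundary_of_invariant_density
    (hφ : ∀ t, Measure.QuasiMeasurePreserving (φ t) μ μ)
    (herg : IsErgodicFlow φ μ) {g : X × ℝ → ℝ≥0∞} (hg : Measurable g)
    (hg0 : ∫⁻ p, g p ∂μ.prod volume ≠ 0) (hgfin : ∫⁻ p, g p ∂μ.prod volume ≠ ∞)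
    (hinv : ∀ t, g ∘ skewProduct φ F t =ᵐ[μ.prod volume] g) :
    IsMeasurableCoboundary φ μ F := by
  let ρ (x : X) : Measure ℝ := volume.withDensity fun y => g (x, y)
  have hρ : Measurable ρ := measurable_withDensity hg
  have hmass : Measurable fun x => ρ x univ := (Measure.measurable_coe .univ).comp hρ
  have hint : ∫⁻ x, ρ x univ ∂μ = ∫⁻ p, g p ∂μ.prod volume := by
    simp [ρ, lintegral_prod _ hg.aemeasurable]
  have hmap (t : ℝ) : ∀ᵐ x ∂μ, ρ (φ t x) = (ρ x).map (· + F t x) :=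
    ae_withDensity_section_eq (hinv t)
  have hmass_invariant (t : ℝ) : (fun x => ρ (φ t x) univ) =ᵐ[μ] fun x => ρ x univ := by
    filter_upwards [hmap t] with x hx
    rw [hx, Measure.map_apply (measurable_add_const _) .univ, preimage_univ]
  have hconst : EventuallyConst {x | ρ x univ ≠ 0} (ae μ) :=
    herg _ (hmass (measurableSet_singleton 0).compl) fun t => (hmass_invariant t).fun_comp (· ≠ 0)
  have hρ0 : ∀ᵐ x ∂μ, ρ x univ ≠ 0 := by
    refine (eventuallyConst_set.1 hconst).resolve_right fun hnull => hg0 ?_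
    rw [← hint, lintegral_eq_zero_iff hmass]
    exact hnull.mono fun x hx => not_not.1 hx
  have hρfin : ∀ᵐ x ∂μ, ρ x univ ≠ ∞ :=
    (ae_lt_top hmass (hint ▸ hgfin)).mono fun _ h => h.ne
  exact isMeasurableCoboundary_of_equivariant_measure hφ hρ hρ0 hρfin hmap

theorem isMeasurableCoboundary_of_invariant_Lp_two
    (hφ : ∀ t, Measure.QuasiMeasurePreserving (φ t) μ μ) (herg : IsErgodicFlow φ μ)
    {w : Lp ℝ 2 (μ.prod (volume : Measure ℝ))} (hw : w ≠ 0)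
    (hinv : ∀ t, w ∘ skewProduct φ F t =ᵐ[μ.prod volume] w) :
    IsMeasurableCoboundary φ μ F := by
  have hmeas : Measurable fun p => ‖w p‖ₑ ^ 2 := (Lp.stronglyMeasurable w).enorm.pow_const 2
  have hnorm : ∫⁻ p, ‖w p‖ₑ ^ 2 ∂μ.prod volume = eLpNorm w 2 (μ.prod volume) ^ 2 := by
    simpa using (eLpNorm_nnreal_pow_eq_lintegral (p := 2) (f := w) (μ := μ.prod volume)
      two_ne_zero).symm
  refine isMeasurableCoboundary_of_invariant_density hφ herg hmeas ?_ ?_ fun t =>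
    (hinv t).fun_comp fun y => ‖y‖ₑ ^ 2
  · rw [hnorm, ← Lp.enorm_def]
    exact pow_ne_zero 2 (enorm_ne_zero.2 hw)
  · rw [hnorm]
    exact ENNReal.pow_ne_top (Lp.eLpNorm_ne_top w)

lemma measureReal_abs_lt_le_measureReal_inter_preimage_skewProduct [IsFiniteMeasure μ] (C t : ℝ) :
    μ.real {x | |F t x| < C} ≤ (μ.prod volume).real
      (univ ×ˢ Icc (0 : ℝ) 1 ∩ skewProduct φ F t ⁻¹' (univ ×ˢ Icc (-C) (C + 1))) := by
  have hsub : {x | |F t x| < C} ×ˢ Icc (0 : ℝ) 1 ⊆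
      univ ×ˢ Icc (0 : ℝ) 1 ∩ skewProduct φ F t ⁻¹' (univ ×ˢ Icc (-C) (C + 1)) := by
    rintro ⟨x, y⟩ ⟨hx, hy⟩
    have hx : -C < F t x ∧ F t x < C := abs_lt.1 hx
    exact ⟨⟨mem_univ x, hy⟩, mem_univ _, by simp only [skewProduct]; linarith [hx.1, hy.1],
      by simp only [skewProduct]; linarith [hx.2, hy.2]⟩
  calc μ.real {x | |F t x| < C} = (μ.prod volume).real ({x | |F t x| < C} ×ˢ Icc (0 : ℝ) 1) := by
        simp [measureReal_prod_prod]
    _ ≤ _ := measureReal_mono hsub (measure_ne_top_of_subset inter_subset_left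
        (by simp [Measure.prod_prod]))

theorem growth_in_cesaro_average_general [IsFiniteMeasure μ] (hφ : IsMeasurePreservingFlow φ μ)
    (herg : IsErgodicFlow φ μ) (hF : IsMeasurableCocycle φ F)
    (hnc : ¬ IsMeasurableCoboundary φ μ F) (C : ℝ) :
    Tendsto (fun T : ℝ => (1 / T) * ∫ t in (0 : ℝ)..T, (μ {x | |F t x| < C}).toReal)
      atTop (𝓝 0) := by
  have hA : MeasurableSet (univ ×ˢ Icc (0 : ℝ) 1 : Set (X × ℝ)) := .prod .univ measurableSet_Icc
  have hB : MeasurableSet (univ ×ˢ Icc (-C) (C + 1) : Set (X × ℝ)) := .prod .univ measurableSet_Icc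
  have hmA : (μ.prod volume) (univ ×ˢ Icc (0 : ℝ) 1) ≠ ∞ := by simp [Measure.prod_prod]
  have hmB : (μ.prod volume) (univ ×ˢ Icc (-C) (C + 1)) ≠ ∞ := by
    simp [Measure.prod_prod, ENNReal.mul_eq_top]
  have hΦ := isMeasurePreservingFlow_skewProduct hφ hF
  have hfix (w : Lp ℝ 2 (μ.prod (volume : Measure ℝ)))
      (hw : ∀ t, w ∘ skewProduct φ F t =ᵐ[μ.prod volume] w) : w = 0 :=
    of_not_not fun hw0 => hnc <| isMeasurableCoboundary_of_invariant_Lp_two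
      (fun t => (hφ.measurePreserving t).quasiMeasurePreserving) herg hw0 hw
  simp_rw [one_div]
  refine tendsto_average_of_norm_le
    (hΦ.intervalIntegrable_measureReal_inter_preimage hA hB hmA) (fun t => ?_)
    (hΦ.tendsto_average_measureReal_inter_preimage hfix hA hB hmA hmB)
  rw [Real.norm_of_nonneg ENNReal.toReal_nonneg]
  exact measureReal_abs_lt_le_measureReal_inter_preimage_skewProduct C t

end Flow

section UniqueErgodicity

open ProbabilityTheory

variable {X : Type*} [MeasurableSpace X] {μ : Measure X}

lemma measurePreserving_cond {f : X → X} (hf : MeasurePreserving f μ μ) {s : Set X}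
    (hs : MeasurableSet s) (hfs : f ⁻¹' s =ᵐ[μ] s) :
    MeasurePreserving f μ[|s] μ[|s] := by
  have hrestrict := hf.restrict_preimage hs
  rw [Measure.restrict_congr_set hfs] at hrestrict
  exact hrestrict.smul_measure _

theorem isErgodicFlow_of_unique_invariant_probability [IsFiniteMeasure μ] {φ : ℝ → X → X}
    (hinv : ∀ t, MeasurePreserving (φ t) μ μ)
    (huniq : ∀ ν : Measure X, IsProbabilityMeasure ν →
      (∀ t, MeasurePreserving (φ t) ν ν) → ν = μ) :
    IsErgodicFlow φ μ := by
  intro s hs hφs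
  refine eventuallyConst_set.2 (or_iff_not_imp_right.2 fun hnull => ?_)
  have hμs : μ s ≠ 0 := fun h => hnull (measure_eq_zero_iff_ae_notMem.1 h)
  have hcond : μ[|s] = μ :=
    huniq _ (cond_isProbabilityMeasure hμs) fun t =>
      measurePreserving_cond (hinv t) hs (hφs t)
  have hae := ae_cond_mem (μ := μ) hs
  rwa [hcond] at hae

end UniqueErgodicity

section BirkhoffIntegral

variable {M : Type*} [TopologicalSpace M] {φ : ℝ → M → M} {f : M → ℝ}

lemma continuous_birkhoffIntegral (hφ : Continuous (uncurry φ)) (hf : Continuous f) :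
    Continuous fun p : ℝ × M => ∫ τ in (0 : ℝ)..p.1, f (φ τ p.2) := by
  have hτ : Continuous (uncurry fun (p : ℝ × M) τ => f (φ τ p.2)) :=
    hf.comp (hφ.comp (by fun_prop : Continuous fun q : (ℝ × M) × ℝ => (q.2, q.1.2)))
  exact intervalIntegral.continuous_parametric_intervalIntegral_of_continuous hτ continuous_fst

lemma birkhoffIntegral_add (hφ : Continuous (uncurry φ))
    (hφadd : ∀ s t, φ (t + s) = φ t ∘ φ s) (hf : Continuous f) (s t : ℝ) (x : M) :
    ∫ τ in (0 : ℝ)..t + s, f (φ τ x) =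
      (∫ τ in (0 : ℝ)..t, f (φ τ x)) + ∫ τ in (0 : ℝ)..s, f (φ τ (φ t x)) := by
  have hτ : Continuous fun τ => f (φ τ x) := hf.comp (hφ.comp (Continuous.prodMk_left x))
  have hshift (τ : ℝ) : f (φ τ (φ t x)) = f (φ (τ + t) x) := by rw [hφadd, comp_apply]
  simp_rw [hshift]
  rw [intervalIntegral.integral_comp_add_right fun τ => f (φ τ x), zero_add, add_comm s t,
    intervalIntegral.integral_add_adjacent_intervals
      (hτ.intervalIntegrable _ _) (hτ.intervalIntegrable _ _)]

theorem isMeasurableCocycle_birkhoffIntegral [MeasurableSpace M] [OpensMeasurableSpace M]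
    (hφ : Continuous (uncurry φ)) (hφadd : ∀ s t, φ (t + s) = φ t ∘ φ s) (hf : Continuous f) :
    IsMeasurableCocycle φ fun t x => ∫ τ in (0 : ℝ)..t, f (φ τ x) where
  measurable_uncurry := (continuous_birkhoffIntegral hφ hf).measurable
  map_add := birkhoffIntegral_add hφ hφadd hf

end BirkhoffIntegral

/-- **Gottschalk–Hedlund type growth in Cesàro average.**
Let `φ` be a continuous flow on a compact metric space `M`, uniquely ergodic with
invariant Borel probability measure `μ`.  Let `f : M → ℝ` be continuous with Birkhoff
integrals `F t x = ∫₀^t f(φ_τ x) dτ`.  If `f` is not a measurable coboundary for `φ`,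
then for every `C > 1` the Cesàro averages `(1/T) ∫₀^T μ{|F_t| < C} dt` tend to `0`. -/
theorem growth_in_cesaro_average
    {M : Type*} [MetricSpace M] [CompactSpace M] [MeasurableSpace M] [BorelSpace M]
    (φ : ℝ → M → M) (hφc : Continuous fun p : ℝ × M => φ p.1 p.2)
    (hφ0 : φ 0 = id) (hφadd : ∀ s t : ℝ, φ (t + s) = φ t ∘ φ s)
    (μ : Measure M) [IsProbabilityMeasure μ]
    (hinv : ∀ t : ℝ, MeasurePreserving (φ t) μ μ)
    (huniq : ∀ ν : Measure M, IsProbabilityMeasure ν →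
      (∀ t : ℝ, MeasurePreserving (φ t) ν ν) → ν = μ)
    (f : M → ℝ) (hf : Continuous f)
    (F : ℝ → M → ℝ) (hF : ∀ (t : ℝ) (x : M), F t x = ∫ τ in (0:ℝ)..t, f (φ τ x))
    (hnc : ¬ ∃ u : M → ℝ, Measurable u ∧
      ∀ t : ℝ, ∀ᵐ x ∂μ, F t x = u (φ t x) - u x) :
    ∀ C : ℝ, 1 < C →
      Tendsto (fun T : ℝ => (1 / T) * ∫ t in (0:ℝ)..T, (μ {x : M | |F t x| < C}).toReal)
        atTop (nhds 0) := by
  obtain rfl : F = fun t x => ∫ τ in (0 : ℝ)..t, f (φ τ x) := funext₂ hF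
  exact fun C _ => growth_in_cesaro_average_general ⟨hφc.measurable, hφ0, hφadd, hinv⟩
    (isErgodicFlow_of_unique_invariant_probability hinv huniq)
    (isMeasurableCocycle_birkhoffIntegral hφc hφadd hf) hnc C
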